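/- The map U ↦ p_U is an isomorphism of lattices from the lattice X(b) of all k-subspaces of V (ordered by inclusion) onto the interval [t⁻¹·id, id] in PPU(b) with the right-invariant order whose negative cone is PPU(b)⁻. In particular, the interval [t⁻¹·id, id] consists exactly of the elements p_U for U a k-subspace of V. -/

import Mathlib

open Finsupp

variable (k : Type*) [Field k] (V : Type*) [AddCommGroup V] [Module k V]

/-- Multiplication by `t^n` on `V[t,t⁻¹] := ℤ →₀ V` (writing `v = ∑ᵢ tⁱ vᵢ` as the
finitely supported function `i ↦ vᵢ`). -/
noncomputable def shift (n : ℤ) : (ℤ →₀ V) ≃ₗ[k] (ℤ →₀ V) :=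
  Finsupp.domLCongr (Equiv.addRight n)

/-- The coefficient of `tⁿ` of `b̃(v,w) = ∑ₙ tⁿ (∑ᵢ b(v_{i-n}, w_i))`. -/
noncomputable def Btilde (b : LinearMap.BilinForm k V) (n : ℤ) (v w : ℤ →₀ V) : k :=
  w.sum fun i wi => b (v (i - n)) wi

/-- `φ` is a paraunitary transformation: an invertible `k[t,t⁻¹]`-linear
(i.e. `k`-linear and commuting with multiplication by `t`) endomorphism of
`V[t,t⁻¹]` preserving `b̃`. -/
def IsPU (b : LinearMap.BilinForm k V) (φ : (ℤ →₀ V) ≃ₗ[k] (ℤ →₀ V)) : Prop :=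
  (∀ v, φ (shift k V 1 v) = shift k V 1 (φ v)) ∧
  ∀ (n : ℤ) (v w : ℤ →₀ V), Btilde k V b n (φ v) (φ w) = Btilde k V b n v w

/-- The specialization `t = 1` of a `k[t,t⁻¹]`-linear endomorphism `f = ∑ᵢ tⁱ fᵢ`
of `V[t,t⁻¹]`, i.e. the endomorphism `ε₁(f) = ∑ᵢ fᵢ` of `V`. -/
noncomputable def eps (f : (ℤ →₀ V) →ₗ[k] (ℤ →₀ V)) : V →ₗ[k] V :=
  (Finsupp.lsum k fun _ : ℤ => (LinearMap.id : V →ₗ[k] V)) ∘ₗ f ∘ₗ Finsupp.lsingle 0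

/-- `φ` is pure paraunitary: paraunitary and specializing to the identity at `t = 1`. -/
def IsPPU (b : LinearMap.BilinForm k V) (φ : (ℤ →₀ V) ≃ₗ[k] (ℤ →₀ V)) : Prop :=
  IsPU k V b φ ∧ eps k V (φ : (ℤ →₀ V) →ₗ[k] (ℤ →₀ V)) = LinearMap.id

/-- `φ ∈ PPU(b)⁻`: pure paraunitary and all Laurent coefficients `φᵢ` for `i > 0` vanish. -/
def PPUneg (b : LinearMap.BilinForm k V) (φ : (ℤ →₀ V) ≃ₗ[k] (ℤ →₀ V)) : Prop :=
  IsPPU k V b φ ∧ ∀ (x : V) (i : ℤ), 0 < i → φ (Finsupp.single 0 x) i = 0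

/-- The orthogonal complement `U* = {v ∈ V | b(u,v) = 0 for all u ∈ U}`. -/
def orthoC (b : LinearMap.BilinForm k V) (U : Submodule k V) : Submodule k V where
  carrier := {v | ∀ u ∈ U, b u v = 0}
  add_mem' := by
    intro a c ha hc u hu
    simp only [Set.mem_setOf_eq] at *
    rw [map_add, ha u hu, hc u hu, add_zero]
  zero_mem' := by intro u _; simp
  smul_mem' := by
    intro c x hx u hu
    simp only [Set.mem_setOf_eq] at *
    rw [map_smul, hx u hu, smul_zero]

/-- The endomorphism `p_U = t⁻¹ π_{U*} + π_U` of `V[t,t⁻¹]`, where `π` is the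
projection of `V` onto `U` along `U*` (so that `π_{U*} = 1 - π`). -/
noncomputable def pULin (π : V →ₗ[k] V) : (ℤ →₀ V) →ₗ[k] (ℤ →₀ V) :=
  (shift k V (-1)).toLinearMap ∘ₗ Finsupp.mapRange.linearMap (LinearMap.id - π) +
    Finsupp.mapRange.linearMap π

/-!
A `k[t,t⁻¹]`-linear map is determined by its Laurent coefficients on `V`, and for a paraunitary `φ`
the coefficient of `φ⁻¹` at `tⁿ` is the adjoint of the coefficient of `φ` at `t⁻ⁿ`. Hence
`tⁿ ≤ φ` says that `φ` has no coefficients below `n`, and the interval `[t⁻¹, 1]` consists of the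
`φ = t⁻¹(1 - f) + f` in `PPU(b)`. Such a `φ` preserves `b̃` iff `f` is an orthogonal
projection, i.e. the projection onto a subspace `U` with `V = U ⊕ U*`. Finally
`p_U p_W⁻¹` has at most one coefficient in positive degree, namely `π_U π_{W*}` at `t`, and this
vanishes iff `W* ⊆ U*`, i.e. iff `U ⊆ W`.
-/

section

variable {R M : Type*} [Ring R] [AddCommGroup M] [Module R M]

theorem linearEquiv_apply_inv_self (e : M ≃ₗ[R] M) (x : M) : e (e⁻¹ x) = x :=
  e.apply_symm_apply x

variable {U W : Submodule R M} {f : M →ₗ[R] M}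

theorem isCompl_of_disjoint_of_forall_mem (hUW : Disjoint U W)
    (hf : ∀ v, f v ∈ U ∧ v - f v ∈ W) : IsCompl U W :=
  ⟨hUW, Submodule.codisjoint_iff_exists_add_eq.2 fun v =>
    ⟨f v, v - f v, (hf v).1, (hf v).2, add_sub_cancel _ _⟩⟩

theorem eq_projection_of_forall_mem (hUW : IsCompl U W) (hf : ∀ v, f v ∈ U ∧ v - f v ∈ W) :
    f = U.projection W hUW := by
  ext v
  conv_rhs => rw [← add_sub_cancel (f v) v]
  rw [map_add, Submodule.projection_apply_of_mem_left hUW (hf v).1,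
    Submodule.projection_apply_of_mem_right hUW (hf v).2, add_zero]

end

section

variable {k V} {b : LinearMap.BilinForm k V} {f g : V →ₗ[k] V}
  {φ ψ : (ℤ →₀ V) ≃ₗ[k] (ℤ →₀ V)}

theorem shift_apply (n i : ℤ) (v : ℤ →₀ V) : shift k V n v i = v (i - n) := by
  simp [shift, Finsupp.domLCongr, sub_eq_add_neg]

theorem shift_single (n i : ℤ) (x : V) : shift k V n (single i x) = single (i + n) x := by
  simp [shift]

theorem shift_mul_shift (m n : ℤ) : shift k V m * shift k V n = shift k V (m + n) := by
  ext v i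
  rw [LinearEquiv.mul_apply, shift_apply, shift_apply, shift_apply, sub_sub]

theorem shift_eq_zpow (n : ℤ) : shift k V n = shift k V 1 ^ n := by
  induction n with
  | zero => ext v i; simp [shift_apply]
  | succ n ih => rw [zpow_add_one, ← ih, shift_mul_shift]
  | pred n ih => rw [zpow_sub_one, ← ih, eq_mul_inv_iff_mul_eq, shift_mul_shift, sub_add_cancel]

theorem map_shift (hφ : ∀ v, φ (shift k V 1 v) = shift k V 1 (φ v)) (n : ℤ) (v : ℤ →₀ V) :
    φ (shift k V n v) = shift k V n (φ v) := by
  have hcomm : Commute φ (shift k V 1) := LinearEquiv.ext hφ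
  rw [shift_eq_zpow]
  exact LinearEquiv.congr_fun (hcomm.zpow_right n).eq v

theorem single_eq_shift (i : ℤ) (x : V) : single i x = shift k V i (single 0 x) := by
  rw [shift_single, zero_add]

theorem btilde_add_left (n : ℤ) (v v' w : ℤ →₀ V) :
    Btilde k V b n (v + v') w = Btilde k V b n v w + Btilde k V b n v' w := by
  simp [Btilde, Finsupp.sum, Finset.sum_add_distrib]

theorem btilde_zero_left (n : ℤ) (w : ℤ →₀ V) : Btilde k V b n 0 w = 0 := by
  simp [Btilde]

theorem btilde_single_right (n j : ℤ) (v : ℤ →₀ V) (y : V) :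
    Btilde k V b n v (single j y) = b (v (j - n)) y :=
  Finsupp.sum_single_index (map_zero _)

theorem btilde_single_left (n i : ℤ) (x : V) (w : ℤ →₀ V) :
    Btilde k V b n (single i x) w = b x (w (i + n)) := by
  rw [Btilde, Finsupp.sum_eq_single (i + n), add_sub_cancel_right, single_eq_same]
  · intro j _ hj
    rw [single_eq_of_ne (by omega), map_zero, LinearMap.zero_apply]
  · simp

theorem btilde_shift_shift (m n : ℤ) (v w : ℤ →₀ V) :
    Btilde k V b n (shift k V m v) (shift k V m w) = Btilde k V b n v w := by
  induction v using Finsupp.induction_linear with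
  | zero => rw [map_zero, btilde_zero_left, btilde_zero_left]
  | add v v' hv hv' => rw [map_add, btilde_add_left, btilde_add_left, hv, hv']
  | single i x =>
    rw [shift_single, btilde_single_left, btilde_single_left, shift_apply, add_right_comm,
      add_sub_cancel_right]

theorem IsPU.bilin_apply_neg (hφ : IsPU k V b φ) (n : ℤ) (x y : V) :
    b (φ (single 0 x) (-n)) y = b x (φ⁻¹ (single 0 y) n) := by
  have h := hφ.2 n (single 0 x) (φ⁻¹ (single 0 y))
  rwa [linearEquiv_apply_inv_self, btilde_single_right, btilde_single_left, zero_sub, zero_add] at h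

theorem IsPU.inv_apply_eq_zero_iff (hb : b.Nondegenerate) (hφ : IsPU k V b φ) (n : ℤ) :
    (∀ x, φ⁻¹ (single 0 x) n = 0) ↔ ∀ x, φ (single 0 x) (-n) = 0 := by
  constructor
  · intro h x
    exact hb.1 _ fun y => by rw [hφ.bilin_apply_neg, h, map_zero]
  · intro h y
    exact hb.2 _ fun x => by rw [← hφ.bilin_apply_neg, h, map_zero, LinearMap.zero_apply]

/-- The augmentation `V[t,t⁻¹] → V`, `t ↦ 1`, which expresses `eps` on all of `V[t,t⁻¹]`. -/
noncomputable def sumCoeff : (ℤ →₀ V) →ₗ[k] V :=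
  Finsupp.lsum k fun _ : ℤ => (LinearMap.id : V →ₗ[k] V)

theorem sumCoeff_single (i : ℤ) (x : V) : sumCoeff (k := k) (single i x) = x := by
  simp [sumCoeff]

theorem sumCoeff_shift (n : ℤ) (v : ℤ →₀ V) :
    sumCoeff (k := k) (shift k V n v) = sumCoeff (k := k) v := by
  induction v using Finsupp.induction_linear with
  | zero => rw [map_zero]
  | add v w hv hw => rw [map_add, map_add, map_add, hv, hw]
  | single j y => rw [shift_single, sumCoeff_single, sumCoeff_single]

theorem isPPU_iff_sumCoeff :
    IsPPU k V b φ ↔ IsPU k V b φ ∧ ∀ v, sumCoeff (k := k) (φ v) = sumCoeff (k := k) v := by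
  refine and_congr_right fun hφ => ⟨fun h v => ?_, fun h => ?_⟩
  · induction v using Finsupp.induction_linear with
    | zero => rw [map_zero]
    | add v w hv hw => rw [map_add, map_add, map_add, hv, hw]
    | single j y =>
      rw [single_eq_shift (k := k), map_shift hφ.1, sumCoeff_shift, sumCoeff_shift, sumCoeff_single]
      exact LinearMap.congr_fun h y
  · ext x
    exact (h _).trans (sumCoeff_single 0 x)

theorem IsPPU.sumCoeff_apply (hφ : IsPPU k V b φ) (v : ℤ →₀ V) :
    sumCoeff (k := k) (φ v) = sumCoeff (k := k) v :=
  (isPPU_iff_sumCoeff.1 hφ).2 v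

theorem IsPU.mul (hφ : IsPU k V b φ) (hψ : IsPU k V b ψ) : IsPU k V b (φ * ψ) :=
  ⟨fun v => by simp only [LinearEquiv.mul_apply, hψ.1, hφ.1],
    fun n v w => by simp only [LinearEquiv.mul_apply, hφ.2, hψ.2]⟩

theorem IsPU.inv (hφ : IsPU k V b φ) : IsPU k V b φ⁻¹ :=
  ⟨fun v => φ.injective (by simp only [hφ.1, linearEquiv_apply_inv_self]),
    fun n v w => by rw [← hφ.2, linearEquiv_apply_inv_self, linearEquiv_apply_inv_self]⟩

variable (b) in
/-- The pure paraunitary group `PPU(b)`, so that group theory can be used for `IsPPU`. -/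
def PPU : Subgroup ((ℤ →₀ V) ≃ₗ[k] (ℤ →₀ V)) where
  carrier := {φ | IsPPU k V b φ}
  one_mem' := ⟨⟨fun _ => rfl, fun _ _ _ => rfl⟩, LinearMap.ext (sumCoeff_single 0)⟩
  mul_mem' hφ hψ := isPPU_iff_sumCoeff.2 ⟨hφ.1.mul hψ.1, fun v => by
    rw [LinearEquiv.mul_apply, hφ.sumCoeff_apply, hψ.sumCoeff_apply]⟩
  inv_mem' hφ := isPPU_iff_sumCoeff.2 ⟨hφ.1.inv, fun v => by
    rw [← hφ.sumCoeff_apply, linearEquiv_apply_inv_self]⟩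

theorem mem_ppu : φ ∈ PPU b ↔ IsPPU k V b φ :=
  Iff.rfl

theorem shift_mem_ppu (n : ℤ) : shift k V n ∈ PPU b := by
  refine mem_ppu.2 (isPPU_iff_sumCoeff.2 ⟨⟨fun v => ?_, btilde_shift_shift n⟩, sumCoeff_shift n⟩)
  rw [← LinearEquiv.mul_apply, ← LinearEquiv.mul_apply, shift_mul_shift, shift_mul_shift, add_comm]

theorem ppuneg_shift_mul_inv_iff (hb : b.Nondegenerate) (n : ℤ) :
    PPUneg k V b (shift k V n * φ⁻¹) ↔
      IsPPU k V b φ ∧ ∀ (x : V) (i : ℤ), i < n → φ (single 0 x) i = 0 := by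
  have hmem : IsPPU k V b (shift k V n * φ⁻¹) ↔ IsPPU k V b φ := by
    rw [← mem_ppu, (PPU b).mul_mem_cancel_left (shift_mem_ppu n), inv_mem_iff, mem_ppu]
  rw [PPUneg, hmem]
  refine and_congr_right fun hφ => ⟨fun h x i hi => ?_, fun h x i hi => ?_⟩
  · have hinv : ∀ y, φ⁻¹ (single 0 y) (-i) = 0 := fun y => by
      have := h y (n - i) (by omega)
      rwa [LinearEquiv.mul_apply, shift_apply, sub_sub_cancel_left] at this
    simpa only [neg_neg] using (hφ.1.inv_apply_eq_zero_iff hb (-i)).1 hinv x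
  · rw [LinearEquiv.mul_apply, shift_apply]
    exact (hφ.1.inv_apply_eq_zero_iff hb (i - n)).2 (fun y => h y _ (by omega)) x

theorem pULin_apply (f : V →ₗ[k] V) (v : ℤ →₀ V) (i : ℤ) :
    pULin k V f v i = f (v i) + (v (i + 1) - f (v (i + 1))) := by
  simp [pULin, shift_apply, add_comm]

theorem pULin_single (f : V →ₗ[k] V) (i : ℤ) (x : V) :
    pULin k V f (single i x) = single i (f x) + single (i - 1) (x - f x) := by
  simp [pULin, shift_single, add_comm, sub_eq_add_neg]

theorem pULin_shift (f : V →ₗ[k] V) (n : ℤ) (v : ℤ →₀ V) :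
    pULin k V f (shift k V n v) = shift k V n (pULin k V f v) := by
  ext i
  simp only [pULin_apply, shift_apply, sub_add_eq_add_sub]

theorem sumCoeff_pULin (f : V →ₗ[k] V) (v : ℤ →₀ V) :
    sumCoeff (k := k) (pULin k V f v) = sumCoeff (k := k) v := by
  induction v using Finsupp.induction_linear with
  | zero => rw [map_zero]
  | add v w hv hw => rw [map_add, map_add, map_add, hv, hw]
  | single i x =>
    rw [pULin_single, map_add, sumCoeff_single, sumCoeff_single, sumCoeff_single, add_sub_cancel]

variable (b f) in
/-- `f` is an orthogonal projection for `b`: its range is orthogonal to the range of `1 - f`.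
For symmetric nondegenerate `b` these are exactly the `π_U` with `V = U ⊕ U*`. -/
def IsOrthProj : Prop :=
  ∀ x y, b (f x) (y - f y) = 0

theorem btilde_pULin_pULin (hsymm : b.IsSymm) (hf : IsOrthProj b f) (n : ℤ)
    (v w : ℤ →₀ V) :
    Btilde k V b n (pULin k V f v) (pULin k V f w) = Btilde k V b n v w := by
  induction v using Finsupp.induction_linear with
  | zero => rw [map_zero, btilde_zero_left, btilde_zero_left]
  | add v v' hv hv' => rw [map_add, btilde_add_left, btilde_add_left, hv, hv']
  | single i x =>
    have hf' : ∀ y z, b (z - f z) (f y) = 0 := fun y z => by rw [hsymm.eq, hf]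
    have hfst : b (f x) (pULin k V f w (i + n)) = b (f x) (w (i + n)) := by
      have h := hf x (w (i + n))
      rw [map_sub, sub_eq_zero] at h
      rw [pULin_apply, map_add, hf, add_zero, ← h]
    have hsnd : b (x - f x) (pULin k V f w (i - 1 + n)) = b (x - f x) (w (i + n)) := by
      rw [pULin_apply, map_add, hf', zero_add, sub_add_eq_add_sub, sub_add_cancel, map_sub, hf',
        sub_zero]
    rw [pULin_single, btilde_add_left, btilde_single_left, btilde_single_left, btilde_single_left,
      hfst, hsnd, ← LinearMap.add_apply, ← map_add, add_sub_cancel]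

theorem isPPU_iff_isOrthProj (hsymm : b.IsSymm)
    (hφ : (φ : (ℤ →₀ V) →ₗ[k] (ℤ →₀ V)) = pULin k V f) :
    IsPPU k V b φ ↔ IsOrthProj b f := by
  have hφv : ∀ v, φ v = pULin k V f v := LinearMap.congr_fun hφ
  refine ⟨fun h x y => ?_,
    fun h => isPPU_iff_sumCoeff.2 ⟨⟨fun v => ?_, fun n v w => ?_⟩, fun v => ?_⟩⟩
  · have := h.1.2 (-1) (single 0 x) (single 0 y)
    rw [hφv, hφv, pULin_single f 0 x, btilde_add_left, btilde_single_left, btilde_single_left,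
      btilde_single_left] at this
    simpa [pULin_apply] using this
  · rw [hφv, hφv, pULin_shift]
  · rw [hφv, hφv, btilde_pULin_pULin hsymm h]
  · rw [hφv, sumCoeff_pULin]

theorem pULin_single_zero_apply_of_ne (f : V →ₗ[k] V) (x : V) {i : ℤ} (hi : i ≠ 0)
    (hi' : i ≠ -1) : pULin k V f (single 0 x) i = 0 := by
  rw [pULin_apply, single_eq_of_ne hi, single_eq_of_ne (by omega), map_zero, sub_zero, add_zero]

theorem IsPPU.exists_coe_eq_pULin (hφ : IsPPU k V b φ)
    (hlow : ∀ (x : V) (i : ℤ), i < -1 → φ (single 0 x) i = 0)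
    (hhigh : ∀ (x : V) (i : ℤ), 0 < i → φ (single 0 x) i = 0) :
    ∃ f, (φ : (ℤ →₀ V) →ₗ[k] (ℤ →₀ V)) = pULin k V f := by
  let f : V →ₗ[k] V := lapply 0 ∘ₗ (φ : (ℤ →₀ V) →ₗ[k] (ℤ →₀ V)) ∘ₗ lsingle 0
  have hcoeff : ∀ x, φ (single 0 x) = single 0 (f x) + single (-1) (φ (single 0 x) (-1)) := by
    intro x
    ext i
    rw [Finsupp.add_apply]
    rcases (by omega : i < -1 ∨ i = -1 ∨ i = 0 ∨ 0 < i) with hi | rfl | rfl | hi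
    · rw [hlow x i hi, single_eq_of_ne (by omega), single_eq_of_ne (by omega), add_zero]
    · simp
    · simp [f]
    · rw [hhigh x i hi, single_eq_of_ne (by omega), single_eq_of_ne (by omega), add_zero]
  have hneg : ∀ x, φ (single 0 x) (-1) = x - f x := by
    intro x
    have h := hφ.sumCoeff_apply (single 0 x)
    rw [hcoeff, map_add, sumCoeff_single, sumCoeff_single, sumCoeff_single] at h
    exact eq_sub_of_add_eq' h
  refine ⟨f, lhom_ext fun i x => ?_⟩
  rw [LinearEquiv.coe_coe, single_eq_shift (k := k), map_shift hφ.1.1, pULin_shift, pULin_single,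
    hcoeff, hneg, zero_sub]

theorem ppuneg_shift_mul_inv_and_ppuneg_iff (hsymm : b.IsSymm) (hb : b.Nondegenerate) :
    PPUneg k V b (shift k V (-1) * φ⁻¹) ∧ PPUneg k V b φ ↔
      ∃ f, IsOrthProj b f ∧ (φ : (ℤ →₀ V) →ₗ[k] (ℤ →₀ V)) = pULin k V f := by
  rw [ppuneg_shift_mul_inv_iff hb]
  constructor
  · rintro ⟨⟨hφ, hlow⟩, -, hhigh⟩
    obtain ⟨f, hf⟩ := hφ.exists_coe_eq_pULin hlow hhigh
    exact ⟨f, (isPPU_iff_isOrthProj hsymm hf).1 hφ, hf⟩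
  · rintro ⟨f, horth, hf⟩
    have hφ : IsPPU k V b φ := (isPPU_iff_isOrthProj hsymm hf).2 horth
    have hcoeff : ∀ x i, i ≠ 0 → i ≠ -1 → φ (single 0 x) i = 0 := fun x i hi hi' =>
      (DFunLike.congr_fun (LinearMap.congr_fun hf _) i).trans
        (pULin_single_zero_apply_of_ne f x hi hi')
    exact ⟨⟨hφ, fun x i hi => hcoeff x i (by omega) (by omega)⟩,
      hφ, fun x i hi => hcoeff x i (by omega) (by omega)⟩

theorem inv_single_of_coe_eq_pULin (hφ : (φ : (ℤ →₀ V) →ₗ[k] (ℤ →₀ V)) = pULin k V f)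
    (hf : IsIdempotentElem f) (i : ℤ) (x : V) :
    φ⁻¹ (single i x) = single i (f x) + single (i + 1) (x - f x) := by
  have hφv : ∀ v, φ v = pULin k V f v := LinearMap.congr_fun hφ
  have hff : f (f x) = f x := LinearMap.congr_fun hf x
  apply φ.injective
  rw [linearEquiv_apply_inv_self, hφv, map_add, pULin_single, pULin_single, map_sub, hff]
  simp

theorem ppuneg_mul_inv_iff (hφ : IsPPU k V b φ) (hψ : IsPPU k V b ψ)
    (hφf : (φ : (ℤ →₀ V) →ₗ[k] (ℤ →₀ V)) = pULin k V f)
    (hψg : (ψ : (ℤ →₀ V) →ₗ[k] (ℤ →₀ V)) = pULin k V g) (hg : IsIdempotentElem g) :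
    PPUneg k V b (φ * ψ⁻¹) ↔ ∀ x, f (x - g x) = 0 := by
  have hcoeff : ∀ (x : V) (i : ℤ), 0 < i →
      (φ * ψ⁻¹) (single 0 x) i = if 1 = i then f (x - g x) else 0 := by
    intro x i hi
    have hφv : ∀ v, φ v = pULin k V f v := LinearMap.congr_fun hφf
    rw [LinearEquiv.mul_apply, inv_single_of_coe_eq_pULin hψg hg, hφv, map_add, Finsupp.add_apply,
      pULin_single_zero_apply_of_ne f _ hi.ne' (by omega), zero_add, zero_add, pULin_apply,
      single_eq_of_ne (by omega : i + 1 ≠ 1), map_zero, sub_zero, add_zero, single_apply,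
      apply_ite f, map_zero]
  refine ⟨fun h x => ?_, fun h => ⟨(PPU b).mul_mem hφ ((PPU b).inv_mem hψ), fun x i hi => ?_⟩⟩
  · rw [← h.2 x 1 one_pos, hcoeff x 1 one_pos, if_pos rfl]
  · rw [hcoeff x i hi, h, ite_self]

variable {U W : Submodule k V}

theorem isCompl_orthoC_of_anisotropic (haniso : ∀ v : V, b v v = 0 → v = 0)
    (hf : ∀ v, f v ∈ U ∧ v - f v ∈ orthoC k V b U) : IsCompl U (orthoC k V b U) :=
  isCompl_of_disjoint_of_forall_mem
    (Submodule.disjoint_def.2 fun v hv hv' => haniso v (hv' v hv)) hf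

theorem nondegenerate_of_anisotropic (hsymm : b.IsSymm) (haniso : ∀ v : V, b v v = 0 → v = 0) :
    b.Nondegenerate :=
  hsymm.isRefl.nondegenerate_iff_separatingLeft.2 fun v hv => haniso v (hv v)

theorem IsOrthProj.sub_mem_orthoC_range (hf : IsOrthProj b f) (v : V) :
    v - f v ∈ orthoC k V b (LinearMap.range f) := by
  rintro _ ⟨x, rfl⟩
  exact hf x v

theorem IsOrthProj.isCompl_range (hsymm : b.IsSymm) (hb : b.Nondegenerate)
    (hf : IsOrthProj b f) :
    IsCompl (LinearMap.range f) (orthoC k V b (LinearMap.range f)) := by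
  refine isCompl_of_disjoint_of_forall_mem (f := f) (Submodule.disjoint_def.2 ?_)
    fun v => ⟨⟨v, rfl⟩, hf.sub_mem_orthoC_range v⟩
  rintro _ ⟨x, rfl⟩ hx
  refine hb.1 _ fun y => ?_
  rw [← sub_add_cancel y (f y), map_add, hf, zero_add, ← hsymm.eq, hx _ ⟨y, rfl⟩]

theorem IsOrthProj.eq_projection_range (hf : IsOrthProj b f)
    (hU : IsCompl (LinearMap.range f) (orthoC k V b (LinearMap.range f))) :
    f = (LinearMap.range f).projection _ hU :=
  eq_projection_of_forall_mem hU fun v => ⟨⟨v, rfl⟩, hf.sub_mem_orthoC_range v⟩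

theorem orthoC_le_orthoC_iff (hsymm : b.IsSymm) (hb : b.Nondegenerate)
    (hW : IsCompl W (orthoC k V b W)) : orthoC k V b W ≤ orthoC k V b U ↔ U ≤ W := by
  refine ⟨fun h u hu => ?_, fun h v hv u hu => hv u (h hu)⟩
  obtain ⟨w, w', hw, hw', rfl⟩ := Submodule.codisjoint_iff_exists_add_eq.1 hW.codisjoint u
  have hW' : ∀ v ∈ orthoC k V b W, b w' v = 0 := fun v hv => by
    simpa [hv w hw] using h hv _ hu
  suffices w' = 0 by rwa [this, add_zero]
  refine hb.1 _ fun v => ?_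
  obtain ⟨z, z', hz, hz', rfl⟩ := Submodule.codisjoint_iff_exists_add_eq.1 hW.codisjoint v
  rw [map_add, hW' z' hz', add_zero, ← hsymm.eq, hw' z hz]

theorem isOrthProj_projection (hU : IsCompl U (orthoC k V b U)) :
    IsOrthProj b (U.projection _ hU) := fun x y =>
  Submodule.sub_projection_mem hU y _ (Submodule.projection_apply_mem hU x)

theorem projection_sub_projection_eq_zero_iff (hsymm : b.IsSymm) (hb : b.Nondegenerate)
    (hU : IsCompl U (orthoC k V b U)) (hW : IsCompl W (orthoC k V b W)) :
    (∀ x, U.projection _ hU (x - W.projection _ hW x) = 0) ↔ U ≤ W := by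
  simp only [Submodule.projection_apply_eq_zero_iff]
  rw [← orthoC_le_orthoC_iff hsymm hb hW]
  refine ⟨fun h w hw => ?_, fun h x => h (Submodule.sub_projection_mem hW x)⟩
  simpa [Submodule.projection_apply_of_mem_right hW hw] using h w

end

theorem stmt18_general (b : LinearMap.BilinForm k V) (hsymm : b.IsSymm) (hb : b.Nondegenerate)
    (p : {U : Submodule k V // IsCompl U (orthoC k V b U)} → ((ℤ →₀ V) ≃ₗ[k] (ℤ →₀ V)))
    (hp : ∀ U, (p U : (ℤ →₀ V) →ₗ[k] (ℤ →₀ V)) = pULin k V (U.1.projection _ U.2)) :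
    (∀ U, PPUneg k V b (shift k V (-1) * (p U)⁻¹) ∧ PPUneg k V b (p U)) ∧
    (∀ U W, U ≤ W ↔ PPUneg k V b (p U * (p W)⁻¹)) ∧
    (∀ φ : (ℤ →₀ V) ≃ₗ[k] (ℤ →₀ V),
      PPUneg k V b (shift k V (-1) * φ⁻¹) → PPUneg k V b φ → ∃ U, φ = p U) := by
  have hmem : ∀ U, PPUneg k V b (shift k V (-1) * (p U)⁻¹) ∧ PPUneg k V b (p U) := fun U =>
    (ppuneg_shift_mul_inv_and_ppuneg_iff hsymm hb).2 ⟨_, isOrthProj_projection U.2, hp U⟩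
  refine ⟨hmem, fun U W => ?_, fun φ hlow hhigh => ?_⟩
  · rw [ppuneg_mul_inv_iff (hmem U).2.1 (hmem W).2.1 (hp U) (hp W)
      (Submodule.isIdempotentElem_projection W.2),
      projection_sub_projection_eq_zero_iff hsymm hb U.2 W.2, Subtype.coe_le_coe]
  · obtain ⟨f, horth, hf⟩ := (ppuneg_shift_mul_inv_and_ppuneg_iff hsymm hb).1 ⟨hlow, hhigh⟩
    have hU := horth.isCompl_range hsymm hb
    refine ⟨⟨LinearMap.range f, hU⟩, LinearEquiv.toLinearMap_injective ?_⟩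
    rw [hf, hp, ← horth.eq_projection_range hU]

/-- `U ↦ p_U` is an isomorphism of lattices from `X(b)` (the lattice
of `k`-subspaces of `V`, ordered by inclusion) onto the interval `[t⁻¹·id, id]` of
`PPU(b)` (ordered by `φ ≤ ψ :⟺ φψ⁻¹ ∈ PPU(b)⁻`); in particular that interval
consists exactly of the elements `p_U`. -/
theorem stmt18 [FiniteDimensional k V] (b : LinearMap.BilinForm k V)
    (hsymm : ∀ v w : V, b v w = b w v)
    (haniso : ∀ v : V, b v v = 0 → v = 0)
    (π : Submodule k V → (V →ₗ[k] V))
    (hπ : ∀ (U : Submodule k V) (v : V), π U v ∈ U ∧ v - π U v ∈ orthoC k V b U)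
    (p : Submodule k V → ((ℤ →₀ V) ≃ₗ[k] (ℤ →₀ V)))
    (hp : ∀ U : Submodule k V, (p U : (ℤ →₀ V) →ₗ[k] (ℤ →₀ V)) = pULin k V (π U)) :
    (∀ U : Submodule k V,
      PPUneg k V b (shift k V (-1) * (p U)⁻¹) ∧ PPUneg k V b (p U)) ∧
    (∀ U W : Submodule k V, U ≤ W ↔ PPUneg k V b (p U * (p W)⁻¹)) ∧
    (∀ φ : (ℤ →₀ V) ≃ₗ[k] (ℤ →₀ V), IsPPU k V b φ →
      PPUneg k V b (shift k V (-1) * φ⁻¹) → PPUneg k V b φ →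
      ∃ U : Submodule k V, φ = p U) := by
  have hU := fun U => isCompl_orthoC_of_anisotropic haniso (hπ U)
  obtain ⟨hmem, hle, hsurj⟩ := stmt18_general k V b ⟨hsymm⟩
    (nondegenerate_of_anisotropic ⟨hsymm⟩ haniso) (fun U => p U) fun U =>
      (hp U).trans (congrArg _ (eq_projection_of_forall_mem U.2 (hπ U)))
  exact ⟨fun U => hmem ⟨U, hU U⟩, fun U W => hle ⟨U, hU U⟩ ⟨W, hU W⟩,
    fun φ _ hlow hhigh => let ⟨U, hφ⟩ := hsurj φ hlow hhigh; ⟨U, hφ⟩⟩
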